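/- Let G = (V,E) be a finite simple connected graph with minimum degree at least 2 and |V| ≥ 4. Then G has a triangle-free 2-edge-cover, and the minimum size of a triangle-free 2-edge-cover of G equals 2|V| − ν, where ν is the maximum size of a triangle-free 2-matching of G. -/

import Mathlib

namespace ECSS

variable {V : Type*}

/-- The spanning subgraph of the vertex type `V` determined by an edge set `F`,
viewed as a simple graph on `V`. -/
def graphOf (F : Finset (Sym2 V)) : SimpleGraph V :=
  SimpleGraph.fromEdgeSet (F : Set (Sym2 V))

/-- `d_F(v)`: the number of edges of the edge set `F` incident to the vertex `v`. -/
noncomputable def degIn (F : Finset (Sym2 V)) (v : V) : ℕ :=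
  {e ∈ (F : Set (Sym2 V)) | v ∈ e}.ncard

/-- `F` is a 2-matching: every vertex is incident to at most 2 edges of `F`. -/
def IsTwoMatching (F : Finset (Sym2 V)) : Prop :=
  ∀ v : V, degIn F v ≤ 2

/-- `F` is a 2-edge-cover: every vertex is incident to at least 2 edges of `F`. -/
def IsTwoEdgeCover (F : Finset (Sym2 V)) : Prop :=
  ∀ v : V, 2 ≤ degIn F v

/-- The vertices `u, v, w` form a triangle 2EC component of the edge set `F`:
they are pairwise distinct, the three edges joining them all belong to `F`, and no
other edge of `F` is incident to any of them (so `{u, v, w}` is a connected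
component of `(V, F)` which is a cycle of length 3). -/
def IsTriangleComponent (F : Finset (Sym2 V)) (u v w : V) : Prop :=
  u ≠ v ∧ u ≠ w ∧ v ≠ w ∧
  s(u, v) ∈ F ∧ s(u, w) ∈ F ∧ s(v, w) ∈ F ∧
  ∀ e ∈ F, (u ∈ e ∨ v ∈ e ∨ w ∈ e) → e = s(u, v) ∨ e = s(u, w) ∨ e = s(v, w)

/-- An edge set `F` is triangle-free if it has no triangle 2EC component. -/
def TriangleFree (F : Finset (Sym2 V)) : Prop :=
  ¬ ∃ u v w : V, IsTriangleComponent F u v w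

/-- A graph is 2-edge-connected if it has at least two vertices and remains
connected after deleting any single edge. -/
def TwoEdgeConnected {α : Type*} (G : SimpleGraph α) : Prop :=
  2 ≤ Nat.card α ∧ G.Connected ∧ ∀ e ∈ G.edgeSet, (G.deleteEdges {e}).Connected

/-- A graph is a cycle if it is connected and every vertex has degree exactly 2. -/
def IsCycleGraph {α : Type*} (G : SimpleGraph α) : Prop :=
  G.Connected ∧ ∀ v : α, (G.neighborSet v).ncard = 2


lemma degIn_eq {V : Type*} [DecidableEq V] (F : Finset (Sym2 V)) (v : V) :
    degIn F v = (F.filter (fun e => v ∈ e)).card := by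
  unfold degIn
  rw [← Set.ncard_coe_finset]
  congr 1
  ext e
  simp

def TC {V : Type*} (F : Finset (Sym2 V)) (T : Finset V) : Prop :=
  T.card = 3 ∧ ∀ u ∈ T, ∀ x, s(u, x) ∈ F ↔ (x ∈ T ∧ x ≠ u)

open Classical in
noncomputable def tri {V : Type*} [Fintype V] (F : Finset (Sym2 V)) : Finset (Finset V) :=
  Finset.univ.filter (fun T => TC F T)

def LL {V : Type*} (F : Finset (Sym2 V)) : Prop := ∀ v, s(v, v) ∉ F

lemma mem_tri {V : Type*} [Fintype V] {F : Finset (Sym2 V)} {T : Finset V} :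
    T ∈ tri F ↔ TC F T := by simp [tri]

lemma degIn_insert {V : Type*} [DecidableEq V] (F : Finset (Sym2 V)) (u v x : V) (h : s(u, v) ∉ F) :
    degIn (insert s(u, v) F) x = degIn F x + if x = u ∨ x = v then 1 else 0 := by
  rw [degIn_eq, degIn_eq, Finset.filter_insert]
  by_cases hx : x = u ∨ x = v
  · rw [if_pos (by simpa using hx), if_pos hx, Finset.card_insert_of_notMem (by simp [h])]
  · rw [if_neg (by simpa using hx), if_neg hx]; rfl

lemma degIn_erase {V : Type*} [DecidableEq V] (F : Finset (Sym2 V)) (u v x : V) (h : s(u, v) ∈ F) :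
    degIn F x = degIn (F.erase s(u, v)) x + if x = u ∨ x = v then 1 else 0 := by
  rw [← degIn_insert _ u v x (by simp), Finset.insert_erase h]

open Classical in
lemma handshake {V : Type*} [Fintype V] (F : Finset (Sym2 V)) (hF : LL F) :
    ∑ v, degIn F v = 2 * F.card := by
  induction F using Finset.induction_on with
  | empty => simp [degIn_eq]
  | insert e F he ih =>
    induction e using Sym2.ind with
    | _ u v =>
    have huv : u ≠ v := by
      rintro rfl; exact hF u (Finset.mem_insert_self _ _)
    have := ih (fun v hv => hF v (Finset.mem_insert_of_mem hv))
    simp only [degIn_insert F u v _ he, Finset.sum_add_distrib, this,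
      Finset.card_insert_of_notMem he]
    rw [← Finset.card_filter]
    have : (Finset.univ.filter (fun x => x = u ∨ x = v)) = {u, v} := by ext; simp
    rw [this, Finset.card_pair huv]; ring

lemma TC.deg {V : Type*} {F : Finset (Sym2 V)} {T : Finset V} (h : TC F T) {u : V}
    (hu : u ∈ T) : degIn F u = 2 := by
  classical
  rw [degIn_eq]
  have : F.filter (fun e => u ∈ e) = (T.erase u).image (fun x => s(u, x)) := by
    ext e
    induction e using Sym2.ind with
    | _ a b =>
    simp only [Finset.mem_filter, Finset.mem_image, Finset.mem_erase, Sym2.mem_iff]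
    constructor
    · rintro ⟨h1, rfl | rfl⟩
      · exact ⟨b, ((h.2 _ hu b).1 h1).symm, rfl⟩
      · rw [Sym2.eq_swap] at h1
        exact ⟨a, ((h.2 _ hu a).1 h1).symm, Sym2.eq_swap⟩
    · rintro ⟨x, hx, he⟩
      have := (h.2 _ hu x).2 hx.symm
      rw [he] at this
      refine ⟨this, ?_⟩
      have : u ∈ s(a, b) := by rw [← he]; simp
      simpa using this
  rw [this, Finset.card_image_of_injective, Finset.card_erase_of_mem hu, h.1]
  intro x y hxy
  exact Sym2.congr_right.1 hxy

lemma TC.unique {V : Type*} {F : Finset (Sym2 V)} {T T' : Finset V} (h : TC F T) (h' : TC F T')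
    {u : V} (hu : u ∈ T) (hu' : u ∈ T') : T = T' := by
  ext x
  by_cases hx : x = u
  · subst hx; simp [hu, hu']
  · have h1 := h.2 u hu x
    have h2 := h'.2 u hu' x
    simp only [hx, ne_eq, not_false_eq_true, and_true] at h1 h2
    rw [← h1, ← h2]

lemma TC.congr {V : Type*} {F F' : Finset (Sym2 V)} {T : Finset V} (h : TC F T)
    (hF : ∀ u ∈ T, ∀ x, s(u, x) ∈ F ↔ s(u, x) ∈ F') : TC F' T :=
  ⟨h.1, fun u hu x => by rw [← hF u hu x]; exact h.2 u hu x⟩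

lemma triangleFree_iff {V : Type*} [Fintype V] (F : Finset (Sym2 V)) (hF : LL F) :
    TriangleFree F ↔ tri F = ∅ := by
  classical
  constructor
  · intro h
    rw [Finset.eq_empty_iff_forall_notMem]
    intro T hT
    rw [mem_tri] at hT
    obtain ⟨u, v, w, huv, huw, hvw, rfl⟩ := Finset.card_eq_three.1 hT.1
    refine h ⟨u, v, w, huv, huw, hvw, ?_, ?_, ?_, ?_⟩
    · rw [hT.2 u (by simp)]; simp [huv.symm]
    · rw [hT.2 u (by simp)]; simp [huw.symm]
    · rw [hT.2 v (by simp)]; simp [hvw.symm]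
    · have key : ∀ a ∈ ({u, v, w} : Finset V), ∀ e ∈ F, a ∈ e →
          e = s(u, v) ∨ e = s(u, w) ∨ e = s(v, w) := by
        intro a ha e he hae
        obtain ⟨x, rfl⟩ := hae
        have := (hT.2 a ha x).1 he
        simp only [Finset.mem_insert, Finset.mem_singleton] at this ha
        rcases ha with rfl | rfl | rfl <;> rcases this with ⟨rfl | rfl | rfl, h⟩ <;>
          simp [Sym2.eq_swap] at h ⊢
      rintro e he (h | h | h)
      · exact key u (by simp) e he h
      · exact key v (by simp) e he h
      · exact key w (by simp) e he h
  · rintro h ⟨u, v, w, huv, huw, hvw, h1, h2, h3, h4⟩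
    have : ({u, v, w} : Finset V) ∈ tri F := by
      rw [mem_tri]
      refine ⟨Finset.card_eq_three.2 ⟨u, v, w, huv, huw, hvw, rfl⟩, ?_⟩
      intro a ha x
      constructor
      · intro hax
        have hne : x ≠ a := by rintro rfl; exact hF _ hax
        refine ⟨?_, hne⟩
        have hx : x ∈ s(a, x) := by simp
        have := h4 _ hax (by simp at ha ⊢; tauto)
        rcases this with h | h | h <;> rw [h] at hx <;> simp at hx ⊢ <;> tauto
      · rintro ⟨hx, hne⟩
        simp only [Finset.mem_insert, Finset.mem_singleton] at ha hx
        rcases ha with rfl | rfl | rfl <;> rcases hx with rfl | rfl | rfl <;>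
          first | exact absurd rfl hne | assumption | (rw [Sym2.eq_swap]; assumption)
    rw [h] at this
    simp at this

noncomputable def dfc {V : Type*} [Fintype V] (F : Finset (Sym2 V)) : ℕ := ∑ v, (2 - degIn F v)
noncomputable def exc {V : Type*} [Fintype V] (F : Finset (Sym2 V)) : ℕ := ∑ v, (degIn F v - 2)

/-- new triangles after inserting -/
lemma TC.of_insert {V : Type*} [DecidableEq V] {F : Finset (Sym2 V)} {T : Finset V} {u v : V}
    (h : TC (insert s(u, v) F) T) (hu : u ∉ T) (hv : v ∉ T) : TC F T := by
  refine h.congr ?_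
  intro a ha x
  have h1 : a ≠ u := by rintro rfl; exact hu ha
  have h2 : a ≠ v := by rintro rfl; exact hv ha
  simp [h1, h2]

lemma TC.of_erase {V : Type*} [DecidableEq V] {F : Finset (Sym2 V)} {T : Finset V} {u v : V}
    (h : TC (F.erase s(u, v)) T) (hu : u ∉ T) (hv : v ∉ T) : TC F T := by
  refine h.congr ?_
  intro a ha x
  have h1 : a ≠ u := by rintro rfl; exact hu ha
  have h2 : a ≠ v := by rintro rfl; exact hv ha
  simp [h1, h2]

lemma dfc_insert_le {V : Type*} [Fintype V] [DecidableEq V] (F : Finset (Sym2 V)) (u v : V)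
    (h : s(u, v) ∉ F) : dfc (insert s(u, v) F) ≤ dfc F := by
  apply Finset.sum_le_sum
  intro x _
  have := degIn_insert F u v x h
  omega

lemma dfc_insert_lt {V : Type*} [Fintype V] [DecidableEq V] (F : Finset (Sym2 V)) (u v : V)
    (h : s(u, v) ∉ F) (hu : degIn F u < 2) : dfc (insert s(u, v) F) < dfc F := by
  apply Finset.sum_lt_sum
  · intro x _
    have := degIn_insert F u v x h
    omega
  · refine ⟨u, Finset.mem_univ _, ?_⟩
    have := degIn_insert F u v u h
    simp at this
    omega

lemma dfc_insert_lt2 {V : Type*} [Fintype V] [DecidableEq V] (F : Finset (Sym2 V)) (u v : V)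
    (huv : u ≠ v)
    (h : s(u, v) ∉ F) (hu : degIn F u < 2) (hv : degIn F v < 2) :
    dfc (insert s(u, v) F) + 2 ≤ dfc F := by
  have h2 : ∑ x : V, (if x = u ∨ x = v then 1 else 0) = 2 := by
    rw [← Finset.card_filter]
    have : (Finset.univ.filter (fun x => x = u ∨ x = v)) = {u, v} := by ext; simp
    rw [this, Finset.card_pair huv]
  unfold dfc
  nth_rewrite 2 [← h2]
  rw [← Finset.sum_add_distrib]
  apply Finset.sum_le_sum
  intro x _
  have := degIn_insert F u v x h
  by_cases hx : x = u ∨ x = v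
  · simp only [hx, if_true] at this ⊢
    rcases hx with rfl | rfl <;> omega
  · simp only [hx, if_false] at this ⊢
    omega

lemma exc_erase_le {V : Type*} [Fintype V] [DecidableEq V] (F : Finset (Sym2 V)) (u v : V)
    (h : s(u, v) ∈ F) : exc (F.erase s(u, v)) ≤ exc F := by
  apply Finset.sum_le_sum
  intro x _
  have := degIn_erase F u v x h
  omega

lemma exc_erase_lt {V : Type*} [Fintype V] [DecidableEq V] (F : Finset (Sym2 V)) (u v : V)
    (h : s(u, v) ∈ F) (hu : 2 < degIn F u) : exc (F.erase s(u, v)) < exc F := by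
  apply Finset.sum_lt_sum
  · intro x _
    have := degIn_erase F u v x h
    omega
  · refine ⟨u, Finset.mem_univ _, ?_⟩
    have := degIn_erase F u v u h
    simp at this
    omega

lemma exists_missing {V : Type*} [Fintype V] (G : SimpleGraph V) (F : Finset (Sym2 V)) (u : V)
    (hu : degIn F u < (G.neighborSet u).ncard) : ∃ v, G.Adj u v ∧ s(u, v) ∉ F := by
  by_contra! hc
  apply absurd hu
  push Not
  apply Set.ncard_le_ncard_of_injOn (fun x => s(u, x))
  · intro x hx
    exact ⟨hc x hx, by simp⟩
  · intro x _ y _ hxy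
    exact Sym2.congr_right.1 hxy

/-- Growing step. -/
lemma grow {V : Type*} [Fintype V] [DecidableEq V] (G : SimpleGraph V)
    (hconn : G.Connected)
    (hmin : ∀ v : V, 2 ≤ (G.neighborSet v).ncard)
    (hV : 4 ≤ Fintype.card V) (F : Finset (Sym2 V))
    (h : dfc F ≠ 0 ∨ tri F ≠ ∅) :
    ∃ u v, G.Adj u v ∧ s(u, v) ∉ F ∧
      1 + dfc (insert s(u, v) F) + (tri (insert s(u, v) F)).card ≤ dfc F + (tri F).card := by
  by_cases hd : dfc F = 0
  · have ht : tri F ≠ ∅ := by tauto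
    obtain ⟨T, hT⟩ := Finset.nonempty_iff_ne_empty.2 ht
    have hTC := mem_tri.1 hT
    obtain ⟨a, ha⟩ : ∃ a, a ∈ T := by
      apply Finset.card_pos.1; rw [hTC.1]; norm_num
    obtain ⟨b, hb⟩ : ∃ b, b ∉ T := by
      by_contra! hc
      have : T = Finset.univ := by ext; simp [hc]
      have h3 := hTC.1
      rw [this, Finset.card_univ] at h3
      omega
    obtain ⟨p⟩ := hconn.preconnected a b
    obtain ⟨d, _, hu, hv⟩ := p.exists_boundary_dart (T : Set V) (by simpa using ha) (by simpa using hb)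
    obtain ⟨⟨u, v⟩, huv⟩ := d
    simp only [Finset.mem_coe] at hu hv
    have hnot : s(u, v) ∉ F := fun hc => hv ((hTC.2 u hu v).1 hc).1
    refine ⟨u, v, huv, hnot, ?_⟩
    have h1 := dfc_insert_le F u v hnot
    have hdu : degIn (insert s(u, v) F) u = 3 := by
      rw [degIn_insert F u v u hnot, hTC.deg hu]; simp
    have h2 : tri (insert s(u, v) F) ⊆ (tri F).erase T := by
      intro T' hT'
      rw [mem_tri] at hT'
      have hu' : u ∉ T' := fun hc => by have := hT'.deg hc; omega
      have hv' : v ∉ T' := fun hc => by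
        apply hu'
        refine ((hT'.2 v hc u).1 ?_).1
        rw [Sym2.eq_swap]; simp
      rw [Finset.mem_erase, mem_tri]
      refine ⟨?_, hT'.of_insert hu' hv'⟩
      rintro rfl
      exact hu' hu
    have h3 := Finset.card_le_card h2
    rw [Finset.card_erase_of_mem hT] at h3
    have h4 : 0 < (tri F).card := Finset.card_pos.2 ⟨T, hT⟩
    omega
  · obtain ⟨u, -, hu⟩ : ∃ u ∈ Finset.univ, 2 - degIn F u ≠ 0 := by
      by_contra! hc
      exact hd (Finset.sum_eq_zero hc)
    obtain ⟨v, huv, hnot⟩ := exists_missing G F u (by have := hmin u; omega)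
    refine ⟨u, v, huv, hnot, ?_⟩
    by_cases hsub : tri (insert s(u, v) F) ⊆ tri F
    · have h1 := dfc_insert_lt F u v hnot (by omega)
      have h2 := Finset.card_le_card hsub
      omega
    · obtain ⟨T, hT, hTn⟩ := Finset.not_subset.1 hsub
      have hboth : ∀ T', T' ∈ tri (insert s(u, v) F) → T' ∉ tri F → u ∈ T' ∧ v ∈ T' := by
        intro T' h1 h2
        rw [mem_tri] at h1 h2
        by_cases hu' : u ∈ T'
        · exact ⟨hu', ((h1.2 u hu' v).1 (by simp)).1⟩
        · by_cases hv' : v ∈ T'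
          · exact ⟨((h1.2 v hv' u).1 (by rw [Sym2.eq_swap]; simp)).1, hv'⟩
          · exact absurd (h1.of_insert hu' hv') h2
      obtain ⟨huT, hvT⟩ := hboth T hT hTn
      have hdu := (mem_tri.1 hT).deg huT
      have hdv := (mem_tri.1 hT).deg hvT
      rw [degIn_insert F u v _ hnot] at hdu hdv
      simp at hdu hdv
      have h1 := dfc_insert_lt2 F u v huv.ne hnot (by omega) (by omega)
      have h2 : tri (insert s(u, v) F) ⊆ insert T (tri F) := by
        intro T' hT'
        rw [Finset.mem_insert]
        by_cases h : T' ∈ tri F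
        · exact Or.inr h
        · left
          exact (mem_tri.1 hT').unique (mem_tri.1 hT) (hboth T' hT' h).1 huT
      have h3 := (Finset.card_le_card h2).trans (Finset.card_insert_le _ _)
      omega

/-- Shrinking step. -/
lemma shrink {V : Type*} [Fintype V] [DecidableEq V] (F : Finset (Sym2 V)) (hF : LL F)
    (h : exc F ≠ 0 ∨ tri F ≠ ∅) :
    ∃ e ∈ F, 1 + exc (F.erase e) + (tri (F.erase e)).card ≤ exc F + (tri F).card := by
  by_cases hd : exc F = 0
  · have ht : tri F ≠ ∅ := by tauto
    obtain ⟨T, hT⟩ := Finset.nonempty_iff_ne_empty.2 ht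
    have hTC := mem_tri.1 hT
    obtain ⟨u, v, hu, hv, huv⟩ := Finset.one_lt_card_iff.1 (by rw [hTC.1]; norm_num : 1 < T.card)
    have he : s(u, v) ∈ F := (hTC.2 u hu v).2 ⟨hv, huv.symm⟩
    refine ⟨s(u, v), he, ?_⟩
    have h1 := exc_erase_le F u v he
    have hdu := degIn_erase F u v u he
    have hdv := degIn_erase F u v v he
    rw [hTC.deg hu] at hdu
    rw [hTC.deg hv] at hdv
    simp at hdu hdv
    have h2 : tri (F.erase s(u, v)) ⊆ (tri F).erase T := by
      intro T' hT'
      rw [mem_tri] at hT'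
      have hu' : u ∉ T' := fun hc => by have := hT'.deg hc; omega
      have hv' : v ∉ T' := fun hc => by have := hT'.deg hc; omega
      rw [Finset.mem_erase, mem_tri]
      refine ⟨?_, hT'.of_erase hu' hv'⟩
      rintro rfl
      exact hu' hu
    have h3 := Finset.card_le_card h2
    rw [Finset.card_erase_of_mem hT] at h3
    have h4 : 0 < (tri F).card := Finset.card_pos.2 ⟨T, hT⟩
    omega
  · obtain ⟨u, -, hu⟩ : ∃ u ∈ Finset.univ, degIn F u - 2 ≠ 0 := by
      by_contra! hc
      exact hd (Finset.sum_eq_zero hc)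
    obtain ⟨v, he⟩ : ∃ v, s(u, v) ∈ F := by
      have : 0 < degIn F u := by omega
      rw [degIn_eq, Finset.card_pos] at this
      obtain ⟨e, he⟩ := this
      rw [Finset.mem_filter] at he
      obtain ⟨he, x, rfl⟩ := he
      exact ⟨x, he⟩
    by_cases hsub : tri (F.erase s(u, v)) ⊆ tri F
    · refine ⟨s(u, v), he, ?_⟩
      have h1 := exc_erase_lt F u v he (by omega)
      have h2 := Finset.card_le_card hsub
      omega
    · obtain ⟨T, hT, hTn⟩ := Finset.not_subset.1 hsub
      rw [mem_tri] at hT hTn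
      have key : ∃ x y, s(x, y) ∈ F ∧ TC (F.erase s(x, y)) T ∧ x ∈ T := by
        by_cases hu' : u ∈ T
        · exact ⟨u, v, he, hT, hu'⟩
        · by_cases hv' : v ∈ T
          · refine ⟨v, u, ?_, ?_, hv'⟩
            · rw [Sym2.eq_swap]; exact he
            · rw [Sym2.eq_swap]; exact hT
          · exact absurd (hT.of_erase hu' hv') hTn
      clear hsub hT hTn hu he u v
      obtain ⟨x, y, he, hT, hx⟩ := key
      have hxy : x ≠ y := by rintro rfl; exact hF _ he
      have hy : y ∉ T := fun hc => by
        have := (hT.2 x hx y).2 ⟨hc, hxy.symm⟩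
        simp at this
      obtain ⟨a, b, hab, hT2⟩ := Finset.card_eq_two.1
        (by rw [Finset.card_erase_of_mem hx, hT.1] : (T.erase x).card = 2)
      have ha : a ≠ x ∧ a ∈ T := by rw [← Finset.mem_erase, hT2]; simp
      have hb : b ≠ x ∧ b ∈ T := by rw [← Finset.mem_erase, hT2]; simp
      have hxa : s(x, a) ∈ F := Finset.mem_of_mem_erase ((hT.2 x hx a).2 ⟨ha.2, ha.1⟩)
      have hxb : s(x, b) ∈ F := Finset.mem_of_mem_erase ((hT.2 x hx b).2 ⟨hb.2, hb.1⟩)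
      have hba : s(b, a) ∈ F := Finset.mem_of_mem_erase ((hT.2 b hb.2 a).2 ⟨ha.2, hab⟩)
      have hdx := degIn_erase F x y x he
      rw [hT.deg hx] at hdx
      have hay : a ≠ y := by rintro rfl; exact hy ha.2
      have hda := degIn_erase F x y a he
      rw [hT.deg ha.2] at hda
      have hda' := degIn_erase F x a a hxa
      simp at hdx
      simp [ha.1, hay] at hda hda'
      refine ⟨s(x, a), hxa, ?_⟩
      have h1 := exc_erase_lt F x a hxa (by omega)
      have h2 : tri (F.erase s(x, a)) ⊆ tri F := by
        intro T' hT'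
        rw [mem_tri] at hT' ⊢
        have ha' : a ∉ T' := fun hc => by have := hT'.deg hc; omega
        have hx' : x ∉ T' := fun hc => by
          have hb' : b ∈ T' := ((hT'.2 x hc b).1 (by
            rw [Finset.mem_erase]
            refine ⟨?_, hxb⟩
            simp [hab.symm, hb.1])).1
          apply ha'
          refine ((hT'.2 b hb' a).1 ?_).1
          rw [Finset.mem_erase]
          refine ⟨?_, hba⟩
          simp [hab.symm, hb.1]
        exact hT'.of_erase hx' ha'
      have h3 := Finset.card_le_card h2
      omega

lemma LL_of_sub {V : Type*} (G : SimpleGraph V) {F : Finset (Sym2 V)}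
    (h : (F : Set (Sym2 V)) ⊆ G.edgeSet) : LL F := by
  intro v hv
  have := h hv
  simp at this

lemma grow_all {V : Type*} [Fintype V] (G : SimpleGraph V)
    (hconn : G.Connected)
    (hmin : ∀ v : V, 2 ≤ (G.neighborSet v).ncard)
    (hV : 4 ≤ Fintype.card V) (k : ℕ) : ∀ (n : ℕ) (F : Finset (Sym2 V)),
    (F : Set (Sym2 V)) ⊆ G.edgeSet → F.card + dfc F + (tri F).card ≤ k →
    dfc F + (tri F).card = n →
    ∃ C : Finset (Sym2 V), (C : Set (Sym2 V)) ⊆ G.edgeSet ∧ dfc C = 0 ∧ tri C = ∅ ∧ C.card ≤ k := by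
  classical
  intro n
  induction n using Nat.strong_induction_on with
  | _ n ih =>
  intro F hF hk hn
  by_cases h : dfc F ≠ 0 ∨ tri F ≠ ∅
  · obtain ⟨u, v, huv, hnot, hle⟩ := grow G hconn hmin hV F h
    refine ih _ ?_ (insert s(u, v) F) ?_ ?_ rfl
    · omega
    · rw [Finset.coe_insert, Set.insert_subset_iff]
      exact ⟨huv, hF⟩
    · rw [Finset.card_insert_of_notMem hnot]; omega
  · push Not at h
    exact ⟨F, hF, h.1, h.2, by omega⟩

lemma shrink_all {V : Type*} [Fintype V] (G : SimpleGraph V) (k : ℕ) :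
    ∀ (n : ℕ) (F : Finset (Sym2 V)),
    (F : Set (Sym2 V)) ⊆ G.edgeSet → k + exc F + (tri F).card ≤ F.card →
    exc F + (tri F).card = n →
    ∃ C : Finset (Sym2 V), (C : Set (Sym2 V)) ⊆ G.edgeSet ∧ exc C = 0 ∧ tri C = ∅ ∧ k ≤ C.card := by
  classical
  intro n
  induction n using Nat.strong_induction_on with
  | _ n ih =>
  intro F hF hk hn
  by_cases h : exc F ≠ 0 ∨ tri F ≠ ∅
  · obtain ⟨e, he, hle⟩ := shrink F (LL_of_sub G hF) h
    refine ih _ ?_ (F.erase e) ?_ ?_ rfl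
    · omega
    · intro x hx
      exact hF (Finset.mem_of_mem_erase hx)
    · rw [Finset.card_erase_of_mem he]; omega
  · push Not at h
    exact ⟨F, hF, h.1, h.2, by omega⟩

/-- Let `G` be a finite simple connected graph with minimum degree
at least 2 and `|V| ≥ 4`. Then `G` has a triangle-free 2-edge-cover, and the
minimum size of a triangle-free 2-edge-cover of `G` equals `2|V| - ν`, where `ν`
is the maximum size of a triangle-free 2-matching of `G`. -/
theorem min_triangleFree_twoEdgeCover
    {V : Type*} [Fintype V] (G : SimpleGraph V)
    (hconn : G.Connected)
    (hmin : ∀ v : V, 2 ≤ (G.neighborSet v).ncard)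
    (hV : 4 ≤ Fintype.card V)
    (ν : ℕ)
    (hν : IsGreatest {n : ℕ | ∃ M : Finset (Sym2 V), (M : Set (Sym2 V)) ⊆ G.edgeSet ∧
      IsTwoMatching M ∧ TriangleFree M ∧ M.card = n} ν) :
    IsLeast {n : ℕ | ∃ C : Finset (Sym2 V), (C : Set (Sym2 V)) ⊆ G.edgeSet ∧
      IsTwoEdgeCover C ∧ TriangleFree C ∧ C.card = n} (2 * Fintype.card V - ν) := by
  have h2V : ∑ _v : V, 2 = 2 * Fintype.card V := by simp [mul_comm]
  have lower : ∀ C : Finset (Sym2 V), (C : Set (Sym2 V)) ⊆ G.edgeSet →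
      IsTwoEdgeCover C → TriangleFree C → 2 * Fintype.card V - ν ≤ C.card := by
    intro C hC hcov htf
    by_cases hbig : 2 * Fintype.card V ≤ C.card
    · omega
    have hs := handshake C (LL_of_sub G hC)
    have ht := (triangleFree_iff C (LL_of_sub G hC)).1 htf
    have he : exc C + 2 * Fintype.card V = 2 * C.card := by
      rw [← hs, ← h2V, exc, ← Finset.sum_add_distrib]
      refine Finset.sum_congr rfl fun v _ => ?_
      have := hcov v
      omega
    obtain ⟨M, hM, h1, h2, h3⟩ := shrink_all G (2 * Fintype.card V - C.card) _ C hC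
      (by rw [ht, Finset.card_empty]; omega) rfl
    have := hν.2 ⟨M, hM, fun v => by
      have := (Finset.sum_eq_zero_iff.1 h1) v (Finset.mem_univ _)
      omega, (triangleFree_iff M (LL_of_sub G hM)).2 h2, rfl⟩
    omega
  constructor
  · obtain ⟨M, hM, hmat, htf, hcard⟩ := hν.1
    have hs := handshake M (LL_of_sub G hM)
    have ht := (triangleFree_iff M (LL_of_sub G hM)).1 htf
    have he : dfc M + 2 * M.card = 2 * Fintype.card V := by
      rw [← hs, ← h2V, dfc, ← Finset.sum_add_distrib]
      refine Finset.sum_congr rfl fun v _ => ?_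
      have := hmat v
      omega
    obtain ⟨C, hC, h1, h2, h3⟩ := grow_all G hconn hmin hV (2 * Fintype.card V - ν) _ M hM
      (by rw [ht, Finset.card_empty]; omega) rfl
    have hcov : IsTwoEdgeCover C := fun v => by
      have := (Finset.sum_eq_zero_iff.1 h1) v (Finset.mem_univ _)
      omega
    have htfC := (triangleFree_iff C (LL_of_sub G hC)).2 h2
    exact ⟨C, hC, hcov, htfC, le_antisymm h3 (lower C hC hcov htfC)⟩
  · rintro n ⟨C, hC, hcov, htf, rfl⟩
    exact lower C hC hcov htf

end ECSS
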